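/- Approximate commutation of the EPR projector with the distinctness projector. Let N ≥ 1 and let ℓ, r ≥ 0 be integers with ℓ + r ≤ N and r ≥ 1, and fix i ∈ [r]. On the space H := ℂ^N ⊗ (ℂ^N⊗ℂ^N)^{⊗ℓ} ⊗ (ℂ^N⊗ℂ^N)^{⊗r} (registers: the query register A, then ℓ 'L-slots' and r 'R-slots', each slot consisting of an x-factor and a y-factor), let Π^xydist be the diagonal projector (acting as identity on A) onto the span of those basis vectors whose ℓ+r x-entries are pairwise distinct and whose ℓ+r y-entries are pairwise distinct; let Π^eq_i := Σ_{u∈[N]} |e_u⟩⟨e_u|_A ⊗ |e_u⟩⟨e_u| on the x-factor of the i-th R-slot (identity elsewhere); and let Π^EPR_i := |EPR⟩⟨EPR| between A and the x-factor of the i-th R-slot (identity elsewhere), where EPR := (1/√N) Σ_{u∈[N]} e_u⊗e_u. Then ‖Π^xydist·(Π^eq_i − Π^EPR_i) − (Π^eq_i − Π^EPR_i)·Π^xydist‖ ≤ √((ℓ+r)/N), where ‖·‖ is the operator norm. -/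

import Mathlib

/-!
The equality projector is diagonal, so it commutes with the distinctness projector `D`, and only
the commutator of `D` with the EPR projector `E` matters. Its `(p, q)` entry is `±1/N` when `p`
and `q` both have the query entry equal to the x-entry of the `i`-th R-slot, agree in all other
entries, and exactly one of them is distinct; otherwise it vanishes (`norm_commutator_entry`).

For fixed `p` the index `q` is determined by its query entry `u`, so each row has at most `N`
nonzero entries. If `p` is distinct, a non-distinct `q` arises only when `u` collides with one of
the x-entries of `p` (`dist_switch`), so such a row has at most `ℓ + r` nonzero entries.
The commutator thus
exchanges distinct and non-distinct indices, with absolute row sums at most `(ℓ + r)/N` on the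
distinct ones and at most `1` on the others; a Schur test (`opNorm_le_of_bipartite`) gives the
bound `√((ℓ + r)/N)`.
-/

open Finset

/-- The `ℓ²` operator norm of a complex matrix. -/
noncomputable def opNorm {ι : Type*} [Fintype ι] [DecidableEq ι] (M : Matrix ι ι ℂ) : ℝ :=
  ‖(Matrix.toEuclideanCLM (𝕜 := ℂ) M : EuclideanSpace ℂ ι →L[ℂ] EuclideanSpace ℂ ι)‖

/-- Index of the space `ℂ^N ⊗ (ℂ^N⊗ℂ^N)^{⊗ℓ} ⊗ (ℂ^N⊗ℂ^N)^{⊗r}`: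
the query register `A`, the `ℓ` L-slots and the `r` R-slots. -/
abbrev RegIdx (N ℓ r : ℕ) := Fin N × (Fin ℓ → Fin N × Fin N) × (Fin r → Fin N × Fin N)

/-- The diagonal projector (identity on the query register) onto the span of basis vectors
whose `ℓ+r` x-entries are pairwise distinct and whose `ℓ+r` y-entries are pairwise
distinct. -/
noncomputable def xyDistProj (N ℓ r : ℕ) : Matrix (RegIdx N ℓ r) (RegIdx N ℓ r) ℂ :=
  Matrix.diagonal fun p =>
    if Function.Injective (Sum.elim (fun j => (p.2.1 j).1) fun j => (p.2.2 j).1) ∧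
        Function.Injective (Sum.elim (fun j => (p.2.1 j).2) fun j => (p.2.2 j).2)
    then 1 else 0

/-- The equality projector `Π^eq_i = Σ_u |e_u⟩⟨e_u|_A ⊗ |e_u⟩⟨e_u|` between the query
register and the x-factor of the `i`-th R-slot, identity elsewhere. -/
noncomputable def eqProjR (N ℓ r : ℕ) (i : Fin r) :
    Matrix (RegIdx N ℓ r) (RegIdx N ℓ r) ℂ :=
  Matrix.of fun p q =>
    if p.1 = q.1 ∧ (p.2.2 i).1 = p.1 ∧ (q.2.2 i).1 = p.1 ∧ (p.2.2 i).2 = (q.2.2 i).2 ∧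
        (∀ j, j ≠ i → p.2.2 j = q.2.2 j) ∧ p.2.1 = q.2.1
    then 1 else 0

/-- The projector `Π^EPR_i = |EPR⟩⟨EPR|` between the query register and the x-factor of
the `i`-th R-slot, identity elsewhere, where `EPR = (1/√N) Σ_u e_u ⊗ e_u`. -/
noncomputable def eprProjR (N ℓ r : ℕ) (i : Fin r) :
    Matrix (RegIdx N ℓ r) (RegIdx N ℓ r) ℂ :=
  Matrix.of fun p q =>
    if (p.2.2 i).1 = p.1 ∧ (q.2.2 i).1 = q.1 ∧ (p.2.2 i).2 = (q.2.2 i).2 ∧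
        (∀ j, j ≠ i → p.2.2 j = q.2.2 j) ∧ p.2.1 = q.2.1
    then (N : ℂ)⁻¹ else 0

/-- The x-entries of all `ℓ + r` slots. -/
def xEntries {N ℓ r : ℕ} (p : RegIdx N ℓ r) : Fin ℓ ⊕ Fin r → Fin N :=
  Sum.elim (fun j => (p.2.1 j).1) fun j => (p.2.2 j).1

/-- The y-entries of all `ℓ + r` slots. -/
def yEntries {N ℓ r : ℕ} (p : RegIdx N ℓ r) : Fin ℓ ⊕ Fin r → Fin N :=
  Sum.elim (fun j => (p.2.1 j).2) fun j => (p.2.2 j).2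

/-- Basis indices in the range of the distinctness projector. -/
def IsXYDist {N ℓ r : ℕ} (p : RegIdx N ℓ r) : Prop :=
  Function.Injective (xEntries p) ∧ Function.Injective (yEntries p)

/-- The pairs of basis indices at which the EPR projector has a nonzero entry. -/
def EprRel {N ℓ r : ℕ} (i : Fin r) (p q : RegIdx N ℓ r) : Prop :=
  (p.2.2 i).1 = p.1 ∧ (q.2.2 i).1 = q.1 ∧ (p.2.2 i).2 = (q.2.2 i).2 ∧
    (∀ j, j ≠ i → p.2.2 j = q.2.2 j) ∧ p.2.1 = q.2.1

lemma EprRel.symm {N ℓ r : ℕ} {i : Fin r} {p q : RegIdx N ℓ r} (h : EprRel i p q) :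
    EprRel i q p :=
  ⟨h.2.1, h.1, h.2.2.1.symm, fun j hj => (h.2.2.2.1 j hj).symm, h.2.2.2.2.symm⟩

lemma EprRel.eq_of_fst {N ℓ r : ℕ} {i : Fin r} {p q q' : RegIdx N ℓ r} (h : EprRel i p q)
    (h' : EprRel i p q') (hq : q.1 = q'.1) : q = q' := by
  obtain ⟨-, h2, h3, h4, h5⟩ := h
  obtain ⟨-, h2', h3', h4', h5'⟩ := h'
  refine Prod.ext hq (Prod.ext (h5.symm.trans h5') (funext fun j => ?_))
  by_cases hj : j = i
  · subst hj
    exact Prod.ext (by rw [h2, h2', hq]) (h3.symm.trans h3')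
  · exact (h4 j hj).symm.trans (h4' j hj)

/-- Passing from a distinct index to a related non-distinct one forces a collision of the new
query entry with an x-entry of the old index. -/
lemma dist_switch {N ℓ r : ℕ} {i : Fin r} {p q : RegIdx N ℓ r} (h : EprRel i p q)
    (hp : IsXYDist p) (hq : ¬ IsXYDist q) : ∃ s, xEntries p s = q.1 := by
  by_contra! hne
  obtain ⟨-, h2, h3, h4, h5⟩ := h
  apply hq
  have hx : ∀ s, s ≠ Sum.inr i → xEntries q s = xEntries p s := by
    rintro (s | s) hs
    · simp [xEntries, h5]
    · have : s ≠ i := fun e => hs (by rw [e])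
      simp [xEntries, h4 s this]
  have hxi : xEntries q (Sum.inr i) = q.1 := by simpa [xEntries] using h2
  have hy : yEntries q = yEntries p := by
    funext s
    rcases s with s | s
    · simp [yEntries, h5]
    · by_cases hs : s = i
      · subst hs
        simp [yEntries, h3]
      · simp [yEntries, h4 s hs]
  refine ⟨fun s t hst => ?_, hy ▸ hp.2⟩
  by_cases hs : s = Sum.inr i <;> by_cases ht : t = Sum.inr i
  · rw [hs, ht]
  · rw [hs, hxi, hx t ht] at hst
    exact absurd hst.symm (hne t)
  · rw [ht, hxi, hx s hs] at hst
    exact absurd hst (hne s)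
  · rw [hx s hs, hx t ht] at hst
    exact hp.1 hst

open Classical in
/-- Schur test for a matrix with entries of size at most `1/N`, supported on a symmetric relation
that joins only good to non-good indices, each index having at most `N` neighbours and each good
index at most `k`. -/
lemma opNorm_le_of_bipartite {ι : Type*} [Fintype ι] [DecidableEq ι] (M : Matrix ι ι ℂ)
    (N k : ℕ) (hN : 1 ≤ N) (S : ι → ι → Prop) (good : ι → Prop)
    (hM : ∀ p q, ‖M p q‖ ≤ if S p q then (N : ℝ)⁻¹ else 0)
    (hsymm : ∀ p q, S p q → S q p)
    (hbip : ∀ p q, S p q → (good p ↔ ¬ good q))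
    (hcardN : ∀ p, (Finset.univ.filter fun q => S p q).card ≤ N)
    (hcardk : ∀ p, good p → (Finset.univ.filter fun q => S p q).card ≤ k) :
    opNorm M ≤ Real.sqrt ((k : ℝ) / N) := by
  have hN0 : (0 : ℝ) < N := by exact_mod_cast hN
  set w : ι → ι → ℝ := fun p q => if S p q then (N : ℝ)⁻¹ else 0 with hw
  have hw0 : ∀ p q, 0 ≤ w p q := fun p q => by simp only [hw]; split_ifs <;> positivity
  have hwsymm : ∀ p q, w p q = w q p := fun p q => by
    have : S p q ↔ S q p := ⟨hsymm p q, hsymm q p⟩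
    simp only [hw, this]
  set R : ι → ℝ := fun p => ∑ q, w p q with hR
  have hRcard : ∀ p, R p = ((Finset.univ.filter fun q => S p q).card : ℝ) / N := fun p => by
    simp only [hR, hw, ← Finset.sum_filter, Finset.sum_const, nsmul_eq_mul, div_eq_mul_inv]
  have hR1 : ∀ p, R p ≤ 1 := fun p => by
    rw [hRcard, div_le_one hN0]
    exact_mod_cast hcardN p
  have hRk : ∀ p, good p → R p ≤ (k : ℝ) / N := fun p hp => by
    rw [hRcard]
    gcongr
    exact hcardk p hp
  have hcol : ∀ q, ∑ p, R p * w p q ≤ (k : ℝ) / N := fun q => by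
    by_cases hq : good q
    · calc ∑ p, R p * w p q ≤ ∑ p, w q p := Finset.sum_le_sum fun p _ => by
            rw [hwsymm q p]
            exact mul_le_of_le_one_left (hw0 p q) (hR1 p)
        _ ≤ (k : ℝ) / N := hRk q hq
    · calc ∑ p, R p * w p q ≤ ∑ p, (k : ℝ) / N * w q p := Finset.sum_le_sum fun p _ => by
            rw [hwsymm q p]
            by_cases h : S p q
            · exact mul_le_mul_of_nonneg_right (hRk p ((hbip p q h).2 hq)) (hw0 p q)
            · simp [hw, h]
        _ = (k : ℝ) / N * R q := by rw [← Finset.mul_sum]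
        _ ≤ (k : ℝ) / N := mul_le_of_le_one_right (by positivity) (hR1 q)
  refine ContinuousLinearMap.opNorm_le_bound _ (Real.sqrt_nonneg _) fun v => ?_
  rw [EuclideanSpace.norm_eq, EuclideanSpace.norm_eq, ← Real.sqrt_mul (by positivity)]
  apply Real.sqrt_le_sqrt
  have hrow : ∀ p, ‖(Matrix.toEuclideanCLM (𝕜 := ℂ) M v) p‖ ^ 2 ≤
      R p * ∑ q, w p q * ‖v q‖ ^ 2 := fun p => by
    have h1 : ‖(Matrix.toEuclideanCLM (𝕜 := ℂ) M v) p‖ ≤ ∑ q, w p q * ‖v q‖ := by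
      have : (Matrix.toEuclideanCLM (𝕜 := ℂ) M v) p = ∑ q, M p q * v q := by
        simp [Matrix.ofLp_toEuclideanCLM, Matrix.mulVec, dotProduct]
      rw [this]
      refine (norm_sum_le _ _).trans (Finset.sum_le_sum fun q _ => ?_)
      rw [norm_mul]
      exact mul_le_mul_of_nonneg_right (hM p q) (norm_nonneg _)
    calc _ ≤ (∑ q, w p q * ‖v q‖) ^ 2 := by gcongr
      _ ≤ _ := Finset.sum_sq_le_sum_mul_sum_of_sq_le_mul _ (fun q _ => hw0 p q)
          (fun q _ => mul_nonneg (hw0 p q) (by positivity)) (fun q _ => le_of_eq (by ring))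
  calc _ ≤ ∑ p, R p * ∑ q, w p q * ‖v q‖ ^ 2 := Finset.sum_le_sum fun p _ => hrow p
    _ = ∑ q, (∑ p, R p * w p q) * ‖v q‖ ^ 2 := by
        simp only [Finset.mul_sum, Finset.sum_mul]
        rw [Finset.sum_comm]
        simp only [mul_assoc]
    _ ≤ ∑ q, (k : ℝ) / N * ‖v q‖ ^ 2 := Finset.sum_le_sum fun q _ =>
        mul_le_mul_of_nonneg_right (hcol q) (by positivity)
    _ = _ := by rw [← Finset.mul_sum]

open Classical in
lemma norm_commutator_entry (N ℓ r : ℕ) (i : Fin r) (p q : RegIdx N ℓ r) :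
    ‖(xyDistProj N ℓ r * (eqProjR N ℓ r i - eprProjR N ℓ r i) -
        (eqProjR N ℓ r i - eprProjR N ℓ r i) * xyDistProj N ℓ r) p q‖ ≤
      if EprRel i p q ∧ (IsXYDist p ↔ ¬ IsXYDist q) then (N : ℝ)⁻¹ else 0 := by
  have hD : xyDistProj N ℓ r = Matrix.diagonal fun p => if IsXYDist p then (1 : ℂ) else 0 := by
    unfold xyDistProj IsXYDist xEntries yEntries
    congr! 2
    congr 1
  have hE : eprProjR N ℓ r i p q = if EprRel i p q then (N : ℂ)⁻¹ else 0 := by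
    simp only [eprProjR, EprRel, Matrix.of_apply]
    congr 1
  rw [hD, Matrix.sub_apply, Matrix.diagonal_mul, Matrix.mul_diagonal, Matrix.sub_apply, hE]
  by_cases hpq : p = q
  · subst hpq
    rw [mul_comm, sub_self, norm_zero]
    split_ifs <;> positivity
  · -- Off the diagonal the equality projector vanishes.
    have hQ : eqProjR N ℓ r i p q = 0 := by
      simp only [eqProjR, Matrix.of_apply]
      refine if_neg fun h => hpq ?_
      obtain ⟨h1, h2, h3, h4, h5, h6⟩ := h
      exact EprRel.eq_of_fst (i := i) (p := p) ⟨h2, h2, rfl, fun _ _ => rfl, rfl⟩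
        ⟨h2, h3.trans h1, h4, h5, h6⟩ h1
    rw [hQ]
    by_cases h : EprRel i p q <;> by_cases hp : IsXYDist p <;> by_cases hq : IsXYDist q <;>
      simp [h, hp, hq]

/-- **Approximate commutation of the EPR projector with the distinctness projector.**
For `ℓ + r ≤ N`, `r ≥ 1` and `i ∈ [r]`,
`‖Π^xydist (Π^eq_i − Π^EPR_i) − (Π^eq_i − Π^EPR_i) Π^xydist‖ ≤ √((ℓ+r)/N)`. -/
theorem epr_dist_approx_commute (N ℓ r : ℕ) (hN : 1 ≤ N) (hr : 1 ≤ r)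
    (hlen : ℓ + r ≤ N) (i : Fin r) :
    opNorm (xyDistProj N ℓ r * (eqProjR N ℓ r i - eprProjR N ℓ r i) -
        (eqProjR N ℓ r i - eprProjR N ℓ r i) * xyDistProj N ℓ r) ≤
      Real.sqrt ((ℓ + r : ℝ) / N) := by
  classical
  have key := opNorm_le_of_bipartite _ N (ℓ + r) hN
    (fun p q => EprRel i p q ∧ (IsXYDist p ↔ ¬ IsXYDist q)) IsXYDist
    (fun p q => by convert norm_commutator_entry N ℓ r i p q)
    (fun p q h => ⟨h.1.symm, by tauto⟩) (fun p q h => h.2) ?_ ?_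
  · simpa using key
  · intro p
    refine (Finset.card_le_card_of_injOn (t := Finset.univ) (fun q => q.1)
      (fun _ _ => Finset.mem_coe.2 (Finset.mem_univ _)) ?_).trans (by simp)
    intro q hq q' hq' h
    simp only [Finset.coe_filter, Finset.mem_univ, true_and, Set.mem_ofPred_eq] at hq hq'
    exact hq.1.eq_of_fst hq'.1 h
  · intro p hp
    refine (Finset.card_le_card_of_injOn (t := Finset.univ.image (xEntries p)) (fun q => q.1)
      ?_ ?_).trans (Finset.card_image_le.trans (by simp))
    · intro q hq
      simp only [Finset.coe_filter, Finset.mem_univ, true_and, Set.mem_ofPred_eq] at hq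
      simpa using dist_switch hq.1 hp (hq.2.1 hp)
    · intro q hq q' hq' h
      simp only [Finset.coe_filter, Finset.mem_univ, true_and, Set.mem_ofPred_eq] at hq hq'
      exact hq.1.eq_of_fst hq'.1 h
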